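/- arXiv:1910.06589 — 2 statements merged into one kernel-verified Lean document; each statement's English description precedes it below -/
import Mathlib

section
/- There exists a differentiable function θ : ℝ → ℝ such that θ′(s) = g(s), κ(s) = f(s)·cos θ(s), and τ(s) = f(s)·sin θ(s) for all s ∈ ℝ. -/
open RealInnerProductSpace

/-- Cross product on `EuclideanSpace ℝ (Fin 3)`. -/
noncomputable def cross3 (u v : EuclideanSpace ℝ (Fin 3)) : EuclideanSpace ℝ (Fin 3) :=
  (EuclideanSpace.equiv (Fin 3) ℝ).symm
    (crossProduct ((EuclideanSpace.equiv (Fin 3) ℝ) u) ((EuclideanSpace.equiv (Fin 3) ℝ) v))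

/-- Determinant of the 3×3 matrix whose rows are the given vectors. -/
noncomputable def det3 (u v w : EuclideanSpace ℝ (Fin 3)) : ℝ :=
  Matrix.det (Matrix.of ![(EuclideanSpace.equiv (Fin 3) ℝ) u,
    (EuclideanSpace.equiv (Fin 3) ℝ) v, (EuclideanSpace.equiv (Fin 3) ℝ) w])

/-!
Since `κ > 0`, the point `(κ, τ)` stays in the right half plane, so `θ = arctan (τ / κ)` is a
globally defined polar angle of it, with radius `f = √(κ² + τ²)`. The chain rule gives
`θ' = (τ / κ)' / (1 + (τ / κ)²) = g`; the geometry enters only through the differentiability of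
`κ` and `τ`.
-/

/-- `‖α''‖`, which is the curvature of `α` when `α` is parametrized by arc length. -/
noncomputable def curvature {E : Type*} [NormedAddCommGroup E] [NormedSpace ℝ E]
    (α : ℝ → E) (s : ℝ) : ℝ :=
  ‖deriv (deriv α) s‖

/-- `N = α'' / ‖α''‖`, which is the principal normal of `α` when `α` is parametrized by arc length;
its junk value is `0` where `α''` vanishes. -/
noncomputable def principalNormal {E : Type*} [NormedAddCommGroup E] [NormedSpace ℝ E]
    (α : ℝ → E) (s : ℝ) : E :=
  (curvature α s)⁻¹ • deriv (deriv α) s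

/-- `B = α' × N`, which is the binormal of `α` when `α` is parametrized by arc length. -/
noncomputable def binormal (α : ℝ → EuclideanSpace ℝ (Fin 3)) (s : ℝ) :
    EuclideanSpace ℝ (Fin 3) :=
  cross3 (deriv α s) (principalNormal α s)

/-- `τ = ⟪N', B⟫`, which is the torsion of `α` when `α` is parametrized by arc length; with this
sign convention right-handed helices have positive torsion. -/
noncomputable def torsion (α : ℝ → EuclideanSpace ℝ (Fin 3)) (s : ℝ) : ℝ :=
  ⟪deriv (principalNormal α) s, binormal α s⟫

theorem contDiff_cross3 {E : Type*} [NormedAddCommGroup E] [NormedSpace ℝ E] {n : WithTop ℕ∞}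
    {u v : E → EuclideanSpace ℝ (Fin 3)} (hu : ContDiff ℝ n u) (hv : ContDiff ℝ n v) :
    ContDiff ℝ n fun x => cross3 (u x) (v x) := by
  have hcross : ContDiff ℝ n fun x => crossProduct.toContinuousBilinearMap
      (EuclideanSpace.equiv (Fin 3) ℝ (u x)) (EuclideanSpace.equiv (Fin 3) ℝ (v x)) := by
    fun_prop
  exact (EuclideanSpace.equiv (Fin 3) ℝ).symm.contDiff.comp hcross

section Frenet

variable {E : Type*} [NormedAddCommGroup E] [InnerProductSpace ℝ E] {n : WithTop ℕ∞}

theorem contDiff_curvature {α : ℝ → E} (hα : ContDiff ℝ (n + 1 + 1) α)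
    (hα₂ : ∀ s, deriv (deriv α) s ≠ 0) : ContDiff ℝ n (curvature α) :=
  hα.deriv'.deriv'.norm ℝ hα₂

theorem contDiff_principalNormal {α : ℝ → E} (hα : ContDiff ℝ (n + 1 + 1) α)
    (hα₂ : ∀ s, deriv (deriv α) s ≠ 0) : ContDiff ℝ n (principalNormal α) :=
  ((contDiff_curvature hα hα₂).inv fun s => norm_ne_zero_iff.2 (hα₂ s)).smul hα.deriv'.deriv'

theorem contDiff_binormal {α : ℝ → EuclideanSpace ℝ (Fin 3)} (hα : ContDiff ℝ (n + 1 + 1) α)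
    (hα₂ : ∀ s, deriv (deriv α) s ≠ 0) : ContDiff ℝ n (binormal α) :=
  contDiff_cross3 (hα.deriv'.of_le le_self_add) (contDiff_principalNormal hα hα₂)

theorem contDiff_torsion {α : ℝ → EuclideanSpace ℝ (Fin 3)} (hα : ContDiff ℝ (n + 1 + 1 + 1) α)
    (hα₂ : ∀ s, deriv (deriv α) s ≠ 0) : ContDiff ℝ n (torsion α) :=
  (contDiff_principalNormal hα hα₂).deriv'.inner ℝ
    (contDiff_binormal (hα.of_le le_self_add) hα₂)

end Frenet

section PolarAngle

theorem sqrt_one_add_div_sq {x : ℝ} (hx : 0 < x) (y : ℝ) :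
    √(1 + (y / x) ^ 2) = √(x ^ 2 + y ^ 2) / x := by
  rw [← Real.sqrt_sq hx.le, ← Real.sqrt_div (by positivity), Real.sqrt_sq hx.le]
  congr 1
  field_simp

theorem sqrt_mul_cos_arctan_div {x : ℝ} (hx : 0 < x) (y : ℝ) :
    √(x ^ 2 + y ^ 2) * Real.cos (Real.arctan (y / x)) = x := by
  rw [Real.cos_arctan, sqrt_one_add_div_sq hx]
  field_simp

theorem sqrt_mul_sin_arctan_div {x : ℝ} (hx : 0 < x) (y : ℝ) :
    √(x ^ 2 + y ^ 2) * Real.sin (Real.arctan (y / x)) = y := by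
  rw [Real.sin_arctan, sqrt_one_add_div_sq hx]
  field_simp

theorem deriv_arctan_div {x y : ℝ → ℝ} {s : ℝ} (hxs : x s ≠ 0)
    (hyx : DifferentiableAt ℝ (fun u => y u / x u) s) :
    deriv (fun u => Real.arctan (y u / x u)) s =
      x s ^ 2 / (x s ^ 2 + y s ^ 2) * deriv (fun u => y u / x u) s := by
  rw [hyx.hasDerivAt.arctan.deriv]
  congr 1
  field_simp

theorem exists_differentiable_polar_angle {x y : ℝ → ℝ} (hx : Differentiable ℝ x)
    (hy : Differentiable ℝ y) (hxpos : ∀ s, 0 < x s) :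
    ∃ θ : ℝ → ℝ, Differentiable ℝ θ ∧ ∀ s,
      deriv θ s = x s ^ 2 / (x s ^ 2 + y s ^ 2) * deriv (fun u => y u / x u) s ∧
      x s = √(x s ^ 2 + y s ^ 2) * Real.cos (θ s) ∧
      y s = √(x s ^ 2 + y s ^ 2) * Real.sin (θ s) := by
  have hxne : ∀ s, x s ≠ 0 := fun s => (hxpos s).ne'
  have hyx : Differentiable ℝ fun u => y u / x u := hy.div hx hxne
  exact ⟨fun s => Real.arctan (y s / x s), hyx.arctan, fun s =>
    ⟨deriv_arctan_div (hxne s) (hyx s), (sqrt_mul_cos_arctan_div (hxpos s) (y s)).symm,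
      (sqrt_mul_sin_arctan_div (hxpos s) (y s)).symm⟩⟩

end PolarAngle

theorem stmt_3_general {α : ℝ → EuclideanSpace ℝ (Fin 3)} (hα : ContDiff ℝ 4 α)
    (hα₂ : ∀ s, deriv (deriv α) s ≠ 0) :
    ∃ θ : ℝ → ℝ, Differentiable ℝ θ ∧ ∀ s,
      deriv θ s = curvature α s ^ 2 / (curvature α s ^ 2 + torsion α s ^ 2) *
        deriv (fun u => torsion α u / curvature α u) s ∧
      curvature α s = √(curvature α s ^ 2 + torsion α s ^ 2) * Real.cos (θ s) ∧
      torsion α s = √(curvature α s ^ 2 + torsion α s ^ 2) * Real.sin (θ s) := by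
  have hα' : ContDiff ℝ (1 + 1 + 1 + 1) α := hα.of_le (by norm_num)
  have hκ : Differentiable ℝ (curvature α) :=
    (contDiff_curvature (hα'.of_le le_self_add) hα₂).differentiable one_ne_zero
  have hτ : Differentiable ℝ (torsion α) :=
    (contDiff_torsion hα' hα₂).differentiable one_ne_zero
  exact exists_differentiable_polar_angle hκ hτ fun s => norm_pos_iff.2 (hα₂ s)

theorem stmt_3
    (α : ℝ → EuclideanSpace ℝ (Fin 3))
    (hα : ContDiff ℝ (⊤ : ℕ∞) α)
    (hunit : ∀ s, ‖deriv α s‖ = 1)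
    (T : ℝ → EuclideanSpace ℝ (Fin 3)) (hT : ∀ s, T s = deriv α s)
    (κ : ℝ → ℝ) (hκ : ∀ s, κ s = ‖deriv (deriv α) s‖) (hκpos : ∀ s, 0 < κ s)
    (N : ℝ → EuclideanSpace ℝ (Fin 3)) (hN : ∀ s, N s = (κ s)⁻¹ • deriv (deriv α) s)
    (B : ℝ → EuclideanSpace ℝ (Fin 3)) (hB : ∀ s, B s = cross3 (T s) (N s))
    (τ : ℝ → ℝ) (hτ : ∀ s, τ s = ⟪deriv N s, B s⟫)
    (f : ℝ → ℝ) (hf : ∀ s, f s = Real.sqrt (κ s ^ 2 + τ s ^ 2))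
    (g : ℝ → ℝ) (hg : ∀ s, g s = κ s ^ 2 / (κ s ^ 2 + τ s ^ 2) * deriv (fun u => τ u / κ u) s)
    (C : ℝ → EuclideanSpace ℝ (Fin 3))
    (hC : ∀ s, C s = (Real.sqrt (κ s ^ 2 + τ s ^ 2))⁻¹ • ((-κ s) • T s + τ s • B s))
    (W : ℝ → EuclideanSpace ℝ (Fin 3))
    (hW : ∀ s, W s = (Real.sqrt (κ s ^ 2 + τ s ^ 2))⁻¹ • (τ s • T s + κ s • B s)) :
    ∃ θ : ℝ → ℝ, Differentiable ℝ θ ∧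
      ∀ s : ℝ, deriv θ s = g s ∧ κ s = f s * Real.cos (θ s) ∧ τ s = f s * Real.sin (θ s) := by
  rw [← funext_iff] at hT hκ hN hB hτ hf hg
  subst hT hκ hN hB hτ hf hg
  exact stmt_3_general (contDiff_infty.1 hα 4) fun s => norm_pos_iff.1 (hκpos s)
end

section
/- If θ is an angle function for α, then for all (s, v): φ_s(s,v) = −v·f(s)·N(s) − cos θ(s)·C(s) + (sin θ(s) + v·g(s))·W(s) and φ_v(s,v) = C(s); hence the first fundamental form coefficients are E = ‖φ_s‖² = v²f(s)² + cos²θ(s) + (sin θ(s) + v·g(s))², F = ⟨φ_s, φ_v⟩ = −cos θ(s), G = ‖φ_v‖² = 1, and EG − F² = v²f(s)² + (sin θ(s) + v·g(s))². -/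
open RealInnerProductSpace

/-!
With `κ = f cos θ` and `τ = f sin θ`, the pair `(C, W)` is the image of `(T, B)` under a reflection
depending only on `θ`: `C = -cos θ • T + sin θ • B` and `W = sin θ • T + cos θ • B`. In `C'`, the
Frenet equations `T' = κ • N` and `B' = -τ • N` contribute `-f • N`, and the variation of the angle
contributes `θ' • W`. A reflection is its own inverse, so `T = -cos θ • C + sin θ • W`, and
`φ_s = T + v • C'` is thereby written in the orthonormal frame `(N, C, W)`, whose second vector is
`φ_v = C`.
-/

section InnerProductSpace

open Real

variable {E : Type*} [NormedAddCommGroup E] [InnerProductSpace ℝ E]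

theorem inner_add_inner_eq_zero_of_inner_const {u v : ℝ → E} {u' v' : E} {c s : ℝ}
    (h : ∀ r, ⟪u r, v r⟫ = c) (hu : HasDerivAt u u' s) (hv : HasDerivAt v v' s) :
    ⟪u s, v'⟫ + ⟪u', v s⟫ = 0 :=
  (hu.inner ℝ hv).unique (by simpa only [h] using hasDerivAt_const s c)

theorem inner_deriv_eq_zero_of_norm_const {u : ℝ → E} {u' : E} {c s : ℝ}
    (h : ∀ r, ‖u r‖ = c) (hu : HasDerivAt u u' s) : ⟪u s, u'⟫ = 0 := by
  have hconst : ∀ r, ⟪u r, u r⟫ = c ^ 2 := fun r => by rw [real_inner_self_eq_norm_sq, h]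
  linarith [inner_add_inner_eq_zero_of_inner_const hconst hu hu, real_inner_comm (u s) u']

section OrthonormalTriple

variable {x y z : E}

theorem orthonormal_triple_iff :
    Orthonormal ℝ ![x, y, z] ↔
      (‖x‖ = 1 ∧ ‖y‖ = 1 ∧ ‖z‖ = 1) ∧ ⟪x, y⟫ = 0 ∧ ⟪x, z⟫ = 0 ∧ ⟪y, z⟫ = 0 := by
  simp only [orthonormal_vecCons_iff, Fin.forall_fin_succ, Matrix.cons_val_zero,
    Matrix.cons_val_succ, Matrix.cons_val_fin_one, forall_const, orthonormal_subsingleton_iff]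
  tauto

theorem norm_sq_of_orthonormal_triple (h : Orthonormal ℝ ![x, y, z]) (a b c : ℝ) :
    ‖a • x + b • y + c • z‖ ^ 2 = a ^ 2 + b ^ 2 + c ^ 2 := by
  have hsum := h.inner_sum ![a, b, c] ![a, b, c] Finset.univ
  simpa [Fin.sum_univ_three, ← sq] using hsum

theorem inner_second_of_orthonormal_triple (h : Orthonormal ℝ ![x, y, z]) (a b c : ℝ) :
    ⟪a • x + b • y + c • z, y⟫ = b := by
  have hsum := h.inner_left_fintype ![a, b, c] 1
  simpa [Fin.sum_univ_three] using hsum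

theorem orthonormal_triple_reflect (h : Orthonormal ℝ ![x, y, z]) (ϑ : ℝ) :
    Orthonormal ℝ ![y, (-cos ϑ) • x + sin ϑ • z, sin ϑ • x + cos ϑ • z] := by
  obtain ⟨⟨hx, hy, hz⟩, hxy, hxz, hyz⟩ := orthonormal_triple_iff.mp h
  have hzx : ⟪z, x⟫ = 0 := by rw [real_inner_comm, hxz]
  have hyx : ⟪y, x⟫ = 0 := by rw [real_inner_comm, hxy]
  have norm_eq_one (a b : ℝ) (hab : a ^ 2 + b ^ 2 = 1) : ‖a • x + b • z‖ = 1 := by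
    rw [← sq_eq_sq₀ (norm_nonneg _) zero_le_one]
    simpa [hab] using norm_sq_of_orthonormal_triple h a 0 b
  refine orthonormal_triple_iff.mpr ⟨⟨hy, norm_eq_one _ _ ?_, norm_eq_one _ _ ?_⟩, ?_, ?_, ?_⟩
  · rw [neg_sq, cos_sq_add_sin_sq]
  · exact sin_sq_add_cos_sq ϑ
  · simp [inner_add_right, real_inner_smul_right, hyx, hyz]
  · simp [inner_add_right, real_inner_smul_right, hyx, hyz]
  · simp [inner_add_left, inner_add_right, real_inner_smul_left, real_inner_smul_right,
      hx, hz, hxz, hzx, mul_comm]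

end OrthonormalTriple

/-- `T`, `N`, `B` is an orthonormal moving frame along the curve `α`, with `T = α'`, satisfying the
Frenet equations `T' = κ N` and `B' = -τ N`. The ambient dimension is arbitrary,
so `N'` need not lie in the span of the frame and no equation is imposed on it. -/
structure IsFrenetFrame (α T N B : ℝ → E) (κ τ : ℝ → ℝ) : Prop where
  orthonormal : ∀ s, Orthonormal ℝ ![T s, N s, B s]
  hasDerivAt_curve : ∀ s, HasDerivAt α (T s) s
  hasDerivAt_tangent : ∀ s, HasDerivAt T (κ s • N s) s
  hasDerivAt_binormal : ∀ s, HasDerivAt B ((-τ s) • N s) s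

theorem hasDerivAt_binormal_of_orthonormal {T N B : ℝ → E} {N' : E} {k s : ℝ}
    (hE : Module.finrank ℝ E = 3) (hframe : ∀ r, Orthonormal ℝ ![T r, N r, B r])
    (hT : HasDerivAt T (k • N s) s) (hN : HasDerivAt N N' s) (hB : DifferentiableAt ℝ B s) :
    HasDerivAt B ((-⟪N', B s⟫) • N s) s := by
  have hpair (r : ℝ) := orthonormal_triple_iff.mp (hframe r)
  obtain ⟨⟨-, hNs, -⟩, hTNs, -, hNBs⟩ := hpair s
  have hTB' : ⟪T s, deriv B s⟫ = 0 := by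
    have h := inner_add_inner_eq_zero_of_inner_const (fun r => (hpair r).2.2.1) hT hB.hasDerivAt
    rwa [real_inner_smul_left, hNBs, mul_zero, add_zero] at h
  have hNB' : ⟪N s, deriv B s⟫ = -⟪N', B s⟫ := eq_neg_of_add_eq_zero_left <|
    inner_add_inner_eq_zero_of_inner_const (fun r => (hpair r).2.2.2) hN hB.hasDerivAt
  have hBB' : ⟪B s, deriv B s⟫ = 0 :=
    inner_deriv_eq_zero_of_norm_const (fun r => (hpair r).1.2.2) hB.hasDerivAt
  refine hB.hasDerivAt.congr_deriv ?_
  refine InnerProductSpace.ext_inner_left_basis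
    (basisOfOrthonormalOfCardEqFinrank (hframe s) (by simp [hE])) fun i => ?_
  rw [coe_basisOfOrthonormalOfCardEqFinrank]
  fin_cases i
  · simp [real_inner_smul_right, hTB', hTNs]
  · simp [real_inner_smul_right, hNB', hNs]
  · simp [real_inner_smul_right, hBB', real_inner_comm (N s), hNBs]

/-- The vector field `C` of the alternative frame `(N, C, W)`, in terms of the angle function. -/
noncomputable def alternativeC (T B : ℝ → E) (θ : ℝ → ℝ) (s : ℝ) : E :=
  (-cos (θ s)) • T s + sin (θ s) • B s

/-- The vector field `W` of the alternative frame `(N, C, W)`, in terms of the angle function. -/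
noncomputable def alternativeW (T B : ℝ → E) (θ : ℝ → ℝ) (s : ℝ) : E :=
  sin (θ s) • T s + cos (θ s) • B s

section AlternativeFrame

variable {α T N B : ℝ → E} {κ τ f θ : ℝ → ℝ} {s : ℝ}

theorem alternativeC_eq_smul (hf : f s ≠ 0) (hκ : κ s = f s * cos (θ s))
    (hτ : τ s = f s * sin (θ s)) :
    alternativeC T B θ s = (f s)⁻¹ • ((-κ s) • T s + τ s • B s) := by
  rw [alternativeC, hκ, hτ]
  match_scalars <;> field_simp

theorem alternativeW_eq_smul (hf : f s ≠ 0) (hκ : κ s = f s * cos (θ s))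
    (hτ : τ s = f s * sin (θ s)) :
    alternativeW T B θ s = (f s)⁻¹ • (τ s • T s + κ s • B s) := by
  rw [alternativeW, hκ, hτ]
  match_scalars <;> field_simp

theorem tangent_eq_alternative (T B : ℝ → E) (θ : ℝ → ℝ) (s : ℝ) :
    T s = (-cos (θ s)) • alternativeC T B θ s + sin (θ s) • alternativeW T B θ s := by
  rw [alternativeC, alternativeW]
  match_scalars
  · linear_combination -sin_sq_add_cos_sq (θ s)
  · ring

namespace IsFrenetFrame

theorem orthonormal_alternative (h : IsFrenetFrame α T N B κ τ) (θ : ℝ → ℝ) (s : ℝ) :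
    Orthonormal ℝ ![N s, alternativeC T B θ s, alternativeW T B θ s] :=
  orthonormal_triple_reflect (h.orthonormal s) (θ s)

theorem hasDerivAt_alternativeC (h : IsFrenetFrame α T N B κ τ) {g : ℝ}
    (hθ : HasDerivAt θ g s) (hκ : κ s = f s * cos (θ s)) (hτ : τ s = f s * sin (θ s)) :
    HasDerivAt (alternativeC T B θ) ((-f s) • N s + g • alternativeW T B θ s) s := by
  have hC := (hθ.cos.neg.smul (h.hasDerivAt_tangent s)).add
    (hθ.sin.smul (h.hasDerivAt_binormal s))
  refine hC.congr_deriv ?_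
  rw [alternativeW, hκ, hτ, Pi.neg_apply]
  match_scalars
  · linear_combination (-f s) * sin_sq_add_cos_sq (θ s)
  · ring
  · ring

theorem hasDerivAt_ruledSurface (h : IsFrenetFrame α T N B κ τ) {g : ℝ} (v : ℝ)
    (hθ : HasDerivAt θ g s) (hκ : κ s = f s * cos (θ s)) (hτ : τ s = f s * sin (θ s)) :
    HasDerivAt (fun u => α u + v • alternativeC T B θ u)
      ((-(v * f s)) • N s + (-cos (θ s)) • alternativeC T B θ s +
        (sin (θ s) + v * g) • alternativeW T B θ s) s := by
  have hφ := (h.hasDerivAt_curve s).add ((h.hasDerivAt_alternativeC hθ hκ hτ).const_smul v)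
  refine hφ.congr_deriv ?_
  rw [tangent_eq_alternative T B θ s]
  module

end IsFrenetFrame

end AlternativeFrame

end InnerProductSpace

theorem deriv_const_add_smul_const {E : Type*} [NormedAddCommGroup E] [NormedSpace ℝ E] (p c : E)
    (v : ℝ) : deriv (fun w : ℝ => p + w • c) v = c := by
  rw [(((hasDerivAt_id' v).smul_const c).const_add p).deriv, one_smul]

theorem orthonormal_cross3 {u v : EuclideanSpace ℝ (Fin 3)} (hu : ‖u‖ = 1) (hv : ‖v‖ = 1)
    (huv : ⟪u, v⟫ = 0) : Orthonormal ℝ ![u, v, cross3 u v] := by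
  refine orthonormal_triple_iff.mpr ⟨⟨hu, hv, ?_⟩, huv, ?_, ?_⟩
  · have hangle := InnerProductGeometry.inner_eq_zero_iff_angle_eq_pi_div_two u v |>.mp huv
    have hnorm := InnerProductGeometry.norm_ofLp_crossProduct u v
    rwa [hangle, Real.sin_pi_div_two, hu, hv, one_mul, one_mul] at hnorm
  · rw [EuclideanSpace.inner_eq_star_dotProduct, star_trivial, dotProduct_comm]
    exact dot_self_cross _ _
  · rw [EuclideanSpace.inner_eq_star_dotProduct, star_trivial, dotProduct_comm]
    exact dot_cross_self _ _

theorem differentiableAt_cross3 {u v : ℝ → EuclideanSpace ℝ (Fin 3)} {s : ℝ}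
    (hu : DifferentiableAt ℝ u s) (hv : DifferentiableAt ℝ v s) :
    DifferentiableAt ℝ (fun r => cross3 (u r) (v r)) s := by
  rw [differentiableAt_euclidean] at hu hv ⊢
  intro i
  fin_cases i
  · exact ((hu 1).mul (hv 2)).sub ((hu 2).mul (hv 1))
  · exact ((hu 2).mul (hv 0)).sub ((hu 0).mul (hv 2))
  · exact ((hu 0).mul (hv 1)).sub ((hu 1).mul (hv 0))

namespace UnitSpeedCurve

section InnerProductSpace

variable {E : Type*} [NormedAddCommGroup E] [InnerProductSpace ℝ E]

/-- The curvature `‖α''‖` of a unit-speed curve `α`. -/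
noncomputable def curvature (α : ℝ → E) (s : ℝ) : ℝ :=
  ‖deriv (deriv α) s‖

/-- The principal normal `α'' / κ` of a unit-speed curve `α`, with junk value `0` where `κ = 0`. -/
noncomputable def principalNormal (α : ℝ → E) (s : ℝ) : E :=
  (curvature α s)⁻¹ • deriv (deriv α) s

variable {α : ℝ → E} {s : ℝ}

theorem norm_principalNormal (hκ : curvature α s ≠ 0) : ‖principalNormal α s‖ = 1 :=
  norm_smul_inv_norm (norm_ne_zero_iff.mp hκ)

theorem hasDerivAt_tangent (hκ : curvature α s ≠ 0) :
    HasDerivAt (deriv α) (curvature α s • principalNormal α s) s := by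
  rw [principalNormal, smul_inv_smul₀ hκ]
  -- `deriv` is `0` where the derivative does not exist, so a nonzero value implies existence.
  exact (differentiableAt_of_deriv_ne_zero (norm_ne_zero_iff.mp hκ)).hasDerivAt

theorem inner_tangent_principalNormal (hunit : ∀ r, ‖deriv α r‖ = 1) (hκ : curvature α s ≠ 0) :
    ⟪deriv α s, principalNormal α s⟫ = 0 := by
  have h := inner_deriv_eq_zero_of_norm_const hunit (hasDerivAt_tangent hκ)
  rw [real_inner_smul_right] at h
  exact (mul_eq_zero.mp h).resolve_left hκ

theorem differentiableAt_principalNormal (hα : DifferentiableAt ℝ (deriv (deriv α)) s)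
    (hκ : curvature α s ≠ 0) : DifferentiableAt ℝ (principalNormal α) s :=
  ((hα.norm ℝ (norm_ne_zero_iff.mp hκ)).inv hκ).smul hα

end InnerProductSpace

/-- The binormal `T × N` of a unit-speed curve. -/
noncomputable def binormal (α : ℝ → EuclideanSpace ℝ (Fin 3)) (s : ℝ) :
    EuclideanSpace ℝ (Fin 3) :=
  cross3 (deriv α s) (principalNormal α s)

/-- The torsion `⟪N', B⟫` of a unit-speed curve. -/
noncomputable def torsion (α : ℝ → EuclideanSpace ℝ (Fin 3)) (s : ℝ) : ℝ :=
  ⟪deriv (principalNormal α) s, binormal α s⟫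

theorem isFrenetFrame {α : ℝ → EuclideanSpace ℝ (Fin 3)}
    (hα : Differentiable ℝ (deriv (deriv α))) (hunit : ∀ s, ‖deriv α s‖ = 1)
    (hκ : ∀ s, curvature α s ≠ 0) :
    IsFrenetFrame α (deriv α) (principalNormal α) (binormal α) (curvature α) (torsion α) := by
  have horth (s : ℝ) : Orthonormal ℝ ![deriv α s, principalNormal α s, binormal α s] :=
    orthonormal_cross3 (hunit s) (norm_principalNormal (hκ s))
      (inner_tangent_principalNormal hunit (hκ s))
  have hT (s : ℝ) := hasDerivAt_tangent (hκ s)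
  have hN (s : ℝ) := differentiableAt_principalNormal (hα s) (hκ s)
  refine ⟨horth, fun s => ?_, hT, fun s => ?_⟩
  · have hne : deriv α s ≠ 0 := norm_ne_zero_iff.mp (by rw [hunit]; exact one_ne_zero)
    exact (differentiableAt_of_deriv_ne_zero hne).hasDerivAt
  · exact hasDerivAt_binormal_of_orthonormal finrank_euclideanSpace_fin horth (hT s)
      (hN s).hasDerivAt (differentiableAt_cross3 (hT s).differentiableAt (hN s))

end UnitSpeedCurve

theorem stmt_8_general {E : Type*} [NormedAddCommGroup E] [InnerProductSpace ℝ E]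
    {α T N B C W : ℝ → E} {κ τ f g θ : ℝ → ℝ}
    (hframe : IsFrenetFrame α T N B κ τ) (hf : ∀ s, f s ≠ 0)
    (hC : ∀ s, C s = (f s)⁻¹ • ((-κ s) • T s + τ s • B s))
    (hW : ∀ s, W s = (f s)⁻¹ • (τ s • T s + κ s • B s))
    (hθ : ∀ s, HasDerivAt θ (g s) s)
    (hκ : ∀ s, κ s = f s * Real.cos (θ s)) (hτ : ∀ s, τ s = f s * Real.sin (θ s))
    {φs φv : ℝ → ℝ → E}
    (hφs : ∀ s v, φs s v = deriv (fun u => α u + v • C u) s)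
    (hφv : ∀ s v, φv s v = deriv (fun w => α s + w • C s) v) (s v : ℝ) :
    φs s v = (-(v * f s)) • N s + (-Real.cos (θ s)) • C s + (Real.sin (θ s) + v * g s) • W s ∧
    φv s v = C s ∧
    ‖φs s v‖ ^ 2 = v ^ 2 * f s ^ 2 + Real.cos (θ s) ^ 2 + (Real.sin (θ s) + v * g s) ^ 2 ∧
    ⟪φs s v, φv s v⟫ = -Real.cos (θ s) ∧
    ‖φv s v‖ ^ 2 = 1 ∧
    ‖φs s v‖ ^ 2 * ‖φv s v‖ ^ 2 - ⟪φs s v, φv s v⟫ ^ 2 =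
      v ^ 2 * f s ^ 2 + (Real.sin (θ s) + v * g s) ^ 2 := by
  obtain rfl : C = alternativeC T B θ :=
    funext fun r => (hC r).trans (alternativeC_eq_smul (hf r) (hκ r) (hτ r)).symm
  obtain rfl : W = alternativeW T B θ :=
    funext fun r => (hW r).trans (alternativeW_eq_smul (hf r) (hκ r) (hτ r)).symm
  have hNCW := hframe.orthonormal_alternative θ s
  have hs := (hφs s v).trans (hframe.hasDerivAt_ruledSurface v (hθ s) (hκ s) (hτ s)).deriv
  have hv := (hφv s v).trans (deriv_const_add_smul_const _ _ v)
  have hE : ‖φs s v‖ ^ 2 =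
      v ^ 2 * f s ^ 2 + Real.cos (θ s) ^ 2 + (Real.sin (θ s) + v * g s) ^ 2 := by
    rw [hs, norm_sq_of_orthonormal_triple hNCW]
    ring
  have hF : ⟪φs s v, φv s v⟫ = -Real.cos (θ s) := by
    rw [hs, hv, inner_second_of_orthonormal_triple hNCW]
  have hG : ‖φv s v‖ ^ 2 = 1 := by
    rw [hv, (orthonormal_triple_iff.mp hNCW).1.2.1, one_pow]
  refine ⟨hs, hv, hE, hF, hG, ?_⟩
  rw [hE, hF, hG]
  ring

theorem stmt_8
    (α : ℝ → EuclideanSpace ℝ (Fin 3))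
    (hα : ContDiff ℝ (⊤ : ℕ∞) α)
    (hunit : ∀ s, ‖deriv α s‖ = 1)
    (T : ℝ → EuclideanSpace ℝ (Fin 3)) (hT : ∀ s, T s = deriv α s)
    (κ : ℝ → ℝ) (hκ : ∀ s, κ s = ‖deriv (deriv α) s‖) (hκpos : ∀ s, 0 < κ s)
    (N : ℝ → EuclideanSpace ℝ (Fin 3)) (hN : ∀ s, N s = (κ s)⁻¹ • deriv (deriv α) s)
    (B : ℝ → EuclideanSpace ℝ (Fin 3)) (hB : ∀ s, B s = cross3 (T s) (N s))
    (τ : ℝ → ℝ) (hτ : ∀ s, τ s = ⟪deriv N s, B s⟫)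
    (f : ℝ → ℝ) (hf : ∀ s, f s = Real.sqrt (κ s ^ 2 + τ s ^ 2))
    (g : ℝ → ℝ) (hg : ∀ s, g s = κ s ^ 2 / (κ s ^ 2 + τ s ^ 2) * deriv (fun u => τ u / κ u) s)
    (C : ℝ → EuclideanSpace ℝ (Fin 3))
    (hC : ∀ s, C s = (Real.sqrt (κ s ^ 2 + τ s ^ 2))⁻¹ • ((-κ s) • T s + τ s • B s))
    (W : ℝ → EuclideanSpace ℝ (Fin 3))
    (hW : ∀ s, W s = (Real.sqrt (κ s ^ 2 + τ s ^ 2))⁻¹ • (τ s • T s + κ s • B s))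
    (θ : ℝ → ℝ) (hθdiff : Differentiable ℝ θ)
    (hθderiv : ∀ s, deriv θ s = g s)
    (hθκ : ∀ s, κ s = f s * Real.cos (θ s))
    (hθτ : ∀ s, τ s = f s * Real.sin (θ s))
    (φs φv : ℝ → ℝ → EuclideanSpace ℝ (Fin 3))
    (hφs : ∀ s v, φs s v = deriv (fun u => α u + v • C u) s)
    (hφv : ∀ s v, φv s v = deriv (fun w => α s + w • C s) v) :
    ∀ (s v : ℝ),
      φs s v = (-(v * f s)) • N s + (-Real.cos (θ s)) • C s + (Real.sin (θ s) + v * g s) • W s ∧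
      φv s v = C s ∧
      ‖φs s v‖ ^ 2 = v ^ 2 * f s ^ 2 + Real.cos (θ s) ^ 2 + (Real.sin (θ s) + v * g s) ^ 2 ∧
      ⟪φs s v, φv s v⟫ = -Real.cos (θ s) ∧
      ‖φv s v‖ ^ 2 = 1 ∧
      ‖φs s v‖ ^ 2 * ‖φv s v‖ ^ 2 - ⟪φs s v, φv s v⟫ ^ 2 =
        v ^ 2 * f s ^ 2 + (Real.sin (θ s) + v * g s) ^ 2 := by
  have hα₂ : Differentiable ℝ (deriv (deriv α)) :=
    (hα.iterate_deriv 2).differentiable (by simp)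
  obtain rfl : T = deriv α := funext hT
  obtain rfl : κ = UnitSpeedCurve.curvature α := funext hκ
  obtain rfl : N = UnitSpeedCurve.principalNormal α := funext hN
  obtain rfl : B = UnitSpeedCurve.binormal α := funext hB
  obtain rfl : τ = UnitSpeedCurve.torsion α := funext hτ
  have hκ₀ (s : ℝ) : UnitSpeedCurve.curvature α s ≠ 0 := (hκpos s).ne'
  have hf₀ (s : ℝ) : f s ≠ 0 := left_ne_zero_of_mul (hθκ s ▸ hκ₀ s)
  exact stmt_8_general (UnitSpeedCurve.isFrenetFrame hα₂ hunit hκ₀) hf₀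
    (fun s => by rw [hC, hf]) (fun s => by rw [hW, hf])
    (fun s => hθderiv s ▸ (hθdiff s).hasDerivAt) hθκ hθτ hφs hφv
end
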